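/- arXiv:1611.10106 — 5 statements merged into one kernel-verified Lean document; each statement's English description precedes it below -/
import Mathlib

section
/- Let J = [t₀, β) ⊆ ℝ be an interval, let g, v : J → ℝ be continuous functions, and let h : J → ℝ be a nonnegative Lebesgue-integrable function such that v(t) ≤ g(t) + ∫_{t₀}^{t} h(s)·v(s) ds for all t ∈ J. Define H(t) = ∫_{t₀}^{t} h(s) ds for t ∈ J. Then v(t) ≤ g(t) + ∫_{t₀}^{t} g(s)·h(s)·exp(H(t) − H(s)) ds for all t ∈ J. -/
/-!
Fix `t` and work on `[t₀, t]`. Put `V x = ∫_{t₀}^x h v`, `H x = ∫_{t₀}^x h` and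
`E x = exp (H t - H x)`, so that `E t = 1` and `V t₀ = 0`. Since `h` is merely integrable, `V` and
`H` are absolutely continuous rather than `C¹`; `E` is absolutely continuous too, being a locally
Lipschitz function of an absolutely continuous one
(`AbsolutelyContinuousOnInterval.real_exp_comp`). By Lebesgue differentiation
`(V E)' = h E (v - V)` almost everywhere, and the hypothesis reads `v - V ≤ g`. The fundamental
theorem of calculus for the absolutely continuous product `V E` therefore gives
`V t = ∫ h E (v - V) ≤ ∫ g h E`, and `v t ≤ g t + V t` concludes.
-/

open MeasureTheory Set Filter in
theorem AbsolutelyContinuousOnInterval.real_exp_comp {f : ℝ → ℝ} {a b : ℝ}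
    (hf : AbsolutelyContinuousOnInterval f a b) :
    AbsolutelyContinuousOnInterval (fun x => Real.exp (f x)) a b := by
  obtain ⟨C, hC⟩ := hf.exists_bound
  -- `exp` is Lipschitz on the compact interval `[-C, C]`, which contains the values of `f`.
  obtain ⟨K, hK⟩ := (Real.contDiff_exp (n := 1)).contDiffOn.exists_lipschitzOnWith (by decide)
    (convex_Icc (-C) C) isCompact_Icc
  have hmem : ∀ x ∈ uIcc a b, f x ∈ Icc (-C) C := fun x hx => abs_le.mp (hC x hx)
  unfold AbsolutelyContinuousOnInterval at hf ⊢
  apply squeeze_zero' ?_ ?_ (by simpa using Tendsto.const_mul (K : ℝ) hf)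
  · exact Eventually.of_forall fun _ => Finset.sum_nonneg fun _ _ => dist_nonneg
  rw [eventually_inf_principal]
  filter_upwards with E hE
  rw [Finset.mul_sum]
  gcongr with i hi
  exact hK.dist_le_mul _ (hmem _ (hE.1 i hi).1) _ (hmem _ (hE.1 i hi).2)

/-- Gronwall-type integral inequality (first form).
If `v t ≤ g t + ∫_{t₀}^t h s * v s ds` on `J = [t₀, β)` with `h` nonnegative and
Lebesgue integrable, then
`v t ≤ g t + ∫_{t₀}^t g s * h s * exp (H t - H s) ds`, where `H t = ∫_{t₀}^t h`. -/
theorem gronwall_inequality_first_form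
    (t₀ β : ℝ) (hβ : t₀ < β)
    (g v h : ℝ → ℝ)
    (hg : ContinuousOn g (Set.Ico t₀ β))
    (hv : ContinuousOn v (Set.Ico t₀ β))
    (hh0 : ∀ t ∈ Set.Ico t₀ β, 0 ≤ h t)
    (hhint : MeasureTheory.IntegrableOn h (Set.Ico t₀ β))
    (hineq : ∀ t ∈ Set.Ico t₀ β, v t ≤ g t + ∫ s in t₀..t, h s * v s) :
    ∀ t ∈ Set.Ico t₀ β,
      v t ≤ g t + ∫ s in t₀..t,
        g s * h s * Real.exp ((∫ u in t₀..t, h u) - ∫ u in t₀..s, h u) := by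
  intro t ht
  have hsub : Set.uIcc t₀ t ⊆ Set.Ico t₀ β := by
    rw [Set.uIcc_of_le ht.1]
    exact Set.Icc_subset_Ico_right ht.2
  have hhi : IntervalIntegrable h MeasureTheory.volume t₀ t :=
    (hhint.mono_set hsub).intervalIntegrable
  have hhv : IntervalIntegrable (fun s => h s * v s) MeasureTheory.volume t₀ t :=
    hhi.mul_continuousOn (hv.mono hsub)
  set V : ℝ → ℝ := fun x => ∫ s in t₀..x, h s * v s with hV
  set H : ℝ → ℝ := fun x => ∫ u in t₀..x, h u with hH
  set E : ℝ → ℝ := fun x => Real.exp (H t - H x) with hE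
  have hVac : AbsolutelyContinuousOnInterval V t₀ t :=
    hhv.absolutelyContinuousOnInterval_intervalIntegral (by simp)
  have hHac : AbsolutelyContinuousOnInterval H t₀ t :=
    hhi.absolutelyContinuousOnInterval_intervalIntegral (by simp)
  have hcac : AbsolutelyContinuousOnInterval (fun _ : ℝ => H t) t₀ t :=
    (contDiff_const (n := 1)).contDiffOn.absolutelyContinuousOnInterval
  have hEac : AbsolutelyContinuousOnInterval E t₀ t := (hcac.fun_sub hHac).real_exp_comp
  have hprod : AbsolutelyContinuousOnInterval (fun x => V x * E x) t₀ t := hVac.fun_mul hEac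
  have hFTC : ∫ x in t₀..t, deriv (fun x => V x * E x) x = V t := by
    rw [hprod.integral_deriv_eq_sub]
    simp [hV, hE]
  have hle : ∫ x in t₀..t, deriv (fun x => V x * E x) x ≤ ∫ s in t₀..t, g s * h s * E s := by
    refine intervalIntegral.integral_mono_ae_restrict ht.1 hprod.intervalIntegrable_deriv
      ((hhi.continuousOn_mul (hg.mono hsub)).mul_continuousOn hEac.continuousOn) ?_
    rw [Filter.EventuallyLE, MeasureTheory.ae_restrict_iff' measurableSet_Icc]
    filter_upwards [hhv.ae_hasDerivAt_integral, hhi.ae_hasDerivAt_integral] with x hx₁ hx₂ hx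
    rw [← Set.uIcc_of_le ht.1] at hx
    have hdV : HasDerivAt V (h x * v x) x := hx₁ hx t₀ (by simp)
    have hdH : HasDerivAt H (h x) x := hx₂ hx t₀ (by simp)
    have hdE : HasDerivAt E (E x * -h x) x := (hdH.const_sub (H t)).exp
    rw [(hdV.fun_mul hdE).deriv]
    have h1 : v x - V x ≤ g x := sub_le_iff_le_add.mpr (hineq x (hsub hx))
    have h2 : 0 ≤ h x * E x := mul_nonneg (hh0 x (hsub hx)) (Real.exp_pos _).le
    calc h x * v x * E x + V x * (E x * -h x) = (v x - V x) * (h x * E x) := by ring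
      _ ≤ g x * (h x * E x) := mul_le_mul_of_nonneg_right h1 h2
      _ = g x * h x * E x := by ring
  calc v t ≤ g t + V t := hineq t ht
    _ ≤ g t + ∫ s in t₀..t, g s * h s * E s := by
      rw [← hFTC]
      gcongr
end

section
/- Let γ ≤ t₀ < β be real numbers, m, n ≥ 1, let f, f̃ : ℝ × (ℝⁿ)ᵐ → ℝⁿ and g₁, …, g_m : [t₀, β) → ℝ be continuous with γ ≤ g_j(t) ≤ t for all t ∈ [t₀, β) and all j. Let θ, θ̃ : [γ, t₀] → ℝⁿ be continuous initial functions, and suppose x, x̃ : [γ, β) → ℝⁿ are continuous, x = θ and x̃ = θ̃ on [γ, t₀], x is differentiable on [t₀, β) with x′(t) = f(t, x(g₁(t)), …, x(g_m(t))), and x̃ is differentiable on [t₀, β) with x̃′(t) = f̃(t, x̃(g₁(t)), …, x̃(g_m(t))). Assume: (i) there is a continuous nonnegative function h : [t₀, β) → ℝ with ‖f(t, x̃(g₁(t)), …, x̃(g_m(t))) − f̃(t, x̃(g₁(t)), …, x̃(g_m(t)))‖ ≤ h(t) · sup_{γ ≤ ξ ≤ t} ‖x(ξ) − x̃(ξ)‖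 for all t ∈ [t₀, β); and (ii) there is a continuous nonnegative function k : [t₀, β) → ℝ with ‖f(t, z₁, …, z_m) − f(t, z₁′, …, z_m′)‖ ≤ k(t) · max_{1 ≤ j ≤ m} ‖z_j − z_j′‖ for all t ∈ [t₀, β) and all z, z′ ∈ (ℝⁿ)ᵐ. Then ‖x(t) − x̃(t)‖ ≤ (sup_{γ ≤ s ≤ t₀} ‖θ(s) − θ̃(s)‖) · exp( ∫_{t₀}^{t} (h(s) + k(s)) ds ) for all t ∈ [t₀, β). -/
/-! The difference `y = x - x̃` obeys the functional differential inequality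
`‖y′(s)‖ ≤ (h s + k s) · C` for every bound `C` of `‖y‖` on the history `[γ, s]`: insert
`f(s, x̃(g₁(s)), …)` between the two right-hand sides and use the two hypotheses on `f` and `f̃`,
the delayed arguments lying in `[γ, s]`. So the theorem is a Grönwall inequality with a running
supremum, `norm_le_of_deriv_le_history`.

For the latter, let `M` bound `‖y‖` on `[γ, t₀]`, let `ε > 0` and put
`B(s) = (M + ε) exp (∫_{t₀}^s q)`. As `q ≥ 0`, `B` is nondecreasing. Up to the first time `t₁` at
which `‖y‖` would reach `B`, the history of `y` at `s` is therefore bounded by `B(s)`, whence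
`‖y′(s)‖ ≤ q(s) B(s) = B′(s)`. Since `‖y(t₀)‖ ≤ B(t₀) - ε`, integration yields
`‖y(t₁)‖ ≤ B(t₁) - ε`, which is absurd. Finally `ε → 0`.
-/

/-- `norm_le_of_deriv_le_history` with a coefficient `q` that is continuous on all of `ℝ` and with
the slack `ε`. -/
lemma norm_lt_of_deriv_le_history {E : Type*} [NormedAddCommGroup E] [NormedSpace ℝ E]
    {γ t₀ T M ε : ℝ} {y y' : ℝ → E} {q : ℝ → ℝ} (hγ : γ ≤ t₀) (hT : t₀ ≤ T) (hε : 0 < ε)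
    (hy : ContinuousOn y (Set.Icc t₀ T))
    (hM : ∀ s ∈ Set.Icc γ t₀, ‖y s‖ ≤ M)
    (hq : Continuous q) (hq0 : ∀ s, 0 ≤ q s)
    (hd : ∀ s ∈ Set.Ico t₀ T, HasDerivWithinAt y (y' s) (Set.Ici s) s)
    (hb : ∀ s ∈ Set.Ico t₀ T, ∀ C, (∀ ξ ∈ Set.Icc γ s, ‖y ξ‖ ≤ C) → ‖y' s‖ ≤ q s * C) :
    ‖y T‖ < (M + ε) * Real.exp (∫ s in t₀..T, q s) := by
  set B : ℝ → ℝ := fun t => (M + ε) * Real.exp (∫ s in t₀..t, q s) with hB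
  have hM0 : 0 ≤ M := (norm_nonneg _).trans (hM t₀ ⟨hγ, le_rfl⟩)
  have hBd : ∀ t, HasDerivAt B (q t * B t) t := by
    intro t
    have h1 : HasDerivAt (fun t => ∫ s in t₀..t, q s) (q t) t :=
      intervalIntegral.integral_hasDerivAt_right (hq.intervalIntegrable _ _)
        (hq.stronglyMeasurableAtFilter _ _) hq.continuousAt
    exact (h1.exp.const_mul (M + ε)).congr_deriv (by simp only [hB]; ring)
  have hB0 : ∀ t, 0 ≤ B t := fun t => by simp only [hB]; positivity
  have hBmono : Monotone B := monotone_of_hasDerivAt_nonneg hBd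
    fun t => mul_nonneg (hq0 t) (hB0 t)
  have hBc : Continuous B := continuous_iff_continuousAt.2 fun t => (hBd t).continuousAt
  have hBt0 : B t₀ = M + ε := by simp [hB]
  by_contra hcon
  rw [not_lt] at hcon
  -- `t₁` is the first time in `[t₀, T]` at which `B ≤ ‖y‖`.
  have hcpt : IsCompact {s ∈ Set.Icc t₀ T | B s ≤ ‖y s‖} :=
    isCompact_Icc.of_isClosed_subset
      (isClosed_Icc.isClosed_le hBc.continuousOn hy.norm) (fun s hs => hs.1)
  obtain ⟨t₁, ⟨ht₁, hBt₁⟩, hmin⟩ := hcpt.exists_isLeast ⟨T, ⟨hT, le_rfl⟩, hcon⟩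
  have hlt : ∀ s ∈ Set.Ico t₀ t₁, ‖y s‖ < B s := by
    intro s hs
    by_contra hc
    exact absurd (hmin ⟨⟨hs.1, hs.2.le.trans ht₁.2⟩, not_lt.1 hc⟩) (not_le.2 hs.2)
  have hhist : ∀ s ∈ Set.Ico t₀ t₁, ∀ ξ ∈ Set.Icc γ s, ‖y ξ‖ ≤ B s := by
    intro s hs ξ hξ
    rcases le_total ξ t₀ with h | h
    · have := hBmono hs.1
      have := hM ξ ⟨hξ.1, h⟩
      linarith
    · exact (hlt ξ ⟨h, hξ.2.trans_lt hs.2⟩).le.trans (hBmono hξ.2)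
  have key := image_norm_le_of_norm_deriv_right_le_deriv_boundary
    (f := y) (f' := y') (a := t₀) (b := t₁) (B := fun t => B t - ε) (B' := fun t => q t * B t)
    (hy.mono (Set.Icc_subset_Icc_right ht₁.2))
    (fun s hs => hd s ⟨hs.1, hs.2.trans_le ht₁.2⟩)
    (by have := hM t₀ ⟨hγ, le_rfl⟩; linarith)
    (fun t => (hBd t).sub_const ε)
    (fun s hs => hb s ⟨hs.1, hs.2.trans_le ht₁.2⟩ _ (hhist s hs))
    (Set.right_mem_Icc.2 ht₁.1)
  linarith

/-- Grönwall's inequality with a running supremum: if `‖y′(s)‖ ≤ q(s) · C` for every bound `C` of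
`‖y‖` on the history `[γ, s]`, then a bound of `‖y‖` on `[γ, t₀]` grows at most by the factor
`exp (∫ q)`. -/
lemma norm_le_of_deriv_le_history {E : Type*} [NormedAddCommGroup E] [NormedSpace ℝ E]
    {γ t₀ T M : ℝ} {y y' : ℝ → E} {q : ℝ → ℝ} (hγ : γ ≤ t₀) (hT : t₀ ≤ T)
    (hy : ContinuousOn y (Set.Icc t₀ T))
    (hM : ∀ s ∈ Set.Icc γ t₀, ‖y s‖ ≤ M)
    (hq : ContinuousOn q (Set.Icc t₀ T)) (hq0 : ∀ s ∈ Set.Icc t₀ T, 0 ≤ q s)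
    (hd : ∀ s ∈ Set.Ico t₀ T, HasDerivWithinAt y (y' s) (Set.Ici s) s)
    (hb : ∀ s ∈ Set.Ico t₀ T, ∀ C, (∀ ξ ∈ Set.Icc γ s, ‖y ξ‖ ≤ C) → ‖y' s‖ ≤ q s * C) :
    ‖y T‖ ≤ M * Real.exp (∫ s in t₀..T, q s) := by
  -- `Q` extends `q` from `[t₀, T]` by constants, to be continuous on the whole line.
  set Q : ℝ → ℝ := Set.IccExtend hT ((Set.Icc t₀ T).domRestrict q) with hQ
  have hQq : ∀ s ∈ Set.Icc t₀ T, Q s = q s := fun s hs => by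
    rw [hQ, Set.IccExtend_of_mem hT _ hs, Set.domRestrict_apply]
  have hint : ∫ s in t₀..T, q s = ∫ s in t₀..T, Q s :=
    intervalIntegral.integral_congr fun s hs => by
      rw [Set.uIcc_of_le hT] at hs
      exact (hQq s hs).symm
  have hlim : Filter.Tendsto (fun ε : ℝ => (M + ε) * Real.exp (∫ s in t₀..T, Q s))
      (nhdsWithin 0 (Set.Ioi 0)) (nhds (M * Real.exp (∫ s in t₀..T, Q s))) := by
    have : Continuous fun ε : ℝ => (M + ε) * Real.exp (∫ s in t₀..T, Q s) := by fun_prop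
    simpa using (this.tendsto 0).mono_left nhdsWithin_le_nhds
  rw [hint]
  refine ge_of_tendsto hlim ?_
  filter_upwards [self_mem_nhdsWithin] with ε hε
  refine (norm_lt_of_deriv_le_history hγ hT hε hy hM hq.domRestrict.Icc_extend'
    (fun s => hq0 _ (Set.projIcc t₀ T hT s).2) hd fun s hs C hC => ?_).le
  change ‖y' s‖ ≤ Q s * C
  rw [hQq s ⟨hs.1, hs.2.le⟩]
  exact hb s hs C hC



/-- Main comparison lemma: if `x` solves the delay ODE driven by `f` with initial
function `θ`, `x̃` solves the delay ODE driven by `f̃` with initial function `θ̃`,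
`f` is Lipschitz in the delayed arguments with coefficient `k t`, and the deviation of
`f̃` from `f` along `x̃` is controlled by `h t · sup_{γ ≤ ξ ≤ t} ‖x ξ - x̃ ξ‖`, then
`‖x t - x̃ t‖ ≤ (sup_{γ ≤ s ≤ t₀} ‖θ s - θ̃ s‖) · exp (∫_{t₀}^t (h + k))`. -/
theorem delay_ode_comparison_lemma
    (γ t₀ β : ℝ) (hγ : γ ≤ t₀) (hβ : t₀ < β)
    (m n : ℕ) (hm : 1 ≤ m) (hn : 1 ≤ n)
    (f ftil : ℝ → (Fin m → (Fin n → ℝ)) → (Fin n → ℝ))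
    (g : Fin m → ℝ → ℝ)
    (θ θtil x xtil : ℝ → (Fin n → ℝ))
    (h k : ℝ → ℝ)
    (hf : Continuous (Function.uncurry f))
    (hftil : Continuous (Function.uncurry ftil))
    (hg : ∀ j, ContinuousOn (g j) (Set.Ico t₀ β))
    (hgγ : ∀ j, ∀ t ∈ Set.Ico t₀ β, γ ≤ g j t)
    (hgt : ∀ j, ∀ t ∈ Set.Ico t₀ β, g j t ≤ t)
    (hθ : ContinuousOn θ (Set.Icc γ t₀))
    (hθtil : ContinuousOn θtil (Set.Icc γ t₀))
    (hx : ContinuousOn x (Set.Ico γ β))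
    (hxtil : ContinuousOn xtil (Set.Ico γ β))
    (hxinit : ∀ t ∈ Set.Icc γ t₀, x t = θ t)
    (hxtinit : ∀ t ∈ Set.Icc γ t₀, xtil t = θtil t)
    (hxode : ∀ t ∈ Set.Ico t₀ β,
      HasDerivWithinAt x (f t (fun j => x (g j t))) (Set.Ici t₀) t)
    (hxtode : ∀ t ∈ Set.Ico t₀ β,
      HasDerivWithinAt xtil (ftil t (fun j => xtil (g j t))) (Set.Ici t₀) t)
    (hh : ContinuousOn h (Set.Ico t₀ β))
    (hh0 : ∀ t ∈ Set.Ico t₀ β, 0 ≤ h t)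
    (hhest : ∀ t ∈ Set.Ico t₀ β,
      ‖f t (fun j => xtil (g j t)) - ftil t (fun j => xtil (g j t))‖ ≤
        h t * ⨆ ξ : Set.Icc γ t, ‖x ξ.1 - xtil ξ.1‖)
    (hk : ContinuousOn k (Set.Ico t₀ β))
    (hk0 : ∀ t ∈ Set.Ico t₀ β, 0 ≤ k t)
    (hlip : ∀ t ∈ Set.Ico t₀ β, ∀ z z' : Fin m → (Fin n → ℝ),
      ‖f t z - f t z'‖ ≤ k t * ⨆ j, ‖z j - z' j‖) :
    ∀ t ∈ Set.Ico t₀ β,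
      ‖x t - xtil t‖ ≤
        (⨆ s : Set.Icc γ t₀, ‖θ s.1 - θtil s.1‖) *
          Real.exp (∫ s in t₀..t, h s + k s) := by

  intro t ht
  set y : ℝ → (Fin n → ℝ) := fun s => x s - xtil s with hydef
  have hIco : Set.Icc t₀ t ⊆ Set.Ico t₀ β := fun s hs => ⟨hs.1, hs.2.trans_lt ht.2⟩
  have hyc : ContinuousOn y (Set.Ico γ β) := hx.sub hxtil
  have hθc : ContinuousOn (fun s => ‖θ s - θtil s‖) (Set.Icc γ t₀) := (hθ.sub hθtil).norm
  have hbdd : BddAbove (Set.range fun s : Set.Icc γ t₀ => ‖θ s.1 - θtil s.1‖) := by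
    have := isCompact_Icc.bddAbove_image hθc
    rwa [Set.image_eq_range] at this
  refine norm_le_of_deriv_le_history (γ := γ) (y := y) (q := fun s => h s + k s)
    (y' := fun s => f s (fun j => x (g j s)) - ftil s (fun j => xtil (g j s))) hγ ht.1
    (hyc.mono fun s hs => ⟨hγ.trans hs.1, hs.2.trans_lt ht.2⟩) ?_
    ((hh.add hk).mono hIco) (fun s hs => add_nonneg (hh0 s (hIco hs)) (hk0 s (hIco hs))) ?_ ?_
  · intro s hs
    simp only [hydef]
    rw [hxinit s hs, hxtinit s hs]
    exact le_ciSup hbdd ⟨s, hs⟩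
  · intro s hs
    have hs' : s ∈ Set.Ico t₀ β := ⟨hs.1, hs.2.trans ht.2⟩
    exact ((hxode s hs').sub (hxtode s hs')).mono (Set.Ici_subset_Ici.2 hs.1)
  · intro s hs C hC
    have hs' : s ∈ Set.Ico t₀ β := ⟨hs.1, hs.2.trans ht.2⟩
    have : Nonempty (Set.Icc γ s) := ⟨⟨s, hγ.trans hs.1, le_rfl⟩⟩
    have : Nonempty (Fin m) := ⟨⟨0, hm⟩⟩
    have h1 : (⨆ ξ : Set.Icc γ s, ‖x ξ.1 - xtil ξ.1‖) ≤ C := ciSup_le fun ξ => hC ξ.1 ξ.2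
    have h2 : (⨆ j, ‖x (g j s) - xtil (g j s)‖) ≤ C :=
      ciSup_le fun j => hC (g j s) ⟨hgγ j s hs', hgt j s hs'⟩
    calc ‖f s (fun j => x (g j s)) - ftil s (fun j => xtil (g j s))‖
        ≤ ‖f s (fun j => x (g j s)) - f s (fun j => xtil (g j s))‖
          + ‖f s (fun j => xtil (g j s)) - ftil s (fun j => xtil (g j s))‖ :=
          norm_sub_le_norm_sub_add_norm_sub _ _ _
      _ ≤ k s * C + h s * C := add_le_add
          ((hlip s hs' _ _).trans (mul_le_mul_of_nonneg_left h2 (hk0 s hs')))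
          ((hhest s hs').trans (mul_le_mul_of_nonneg_left h1 (hh0 s hs')))
      _ = (h s + k s) * C := by ring
end

section
/- Let γ ≤ t₀ < β be real numbers, m, n ≥ 1, let f : ℝ × (ℝⁿ)ᵐ → ℝⁿ and g₁, …, g_m : [t₀, β) → ℝ be continuous with γ ≤ g_j(t) ≤ t for all t ∈ [t₀, β) and all j, and suppose there is a continuous function k : [t₀, β) → ℝ with ‖f(t, z₁, …, z_m) − f(t, z₁′, …, z_m′)‖ ≤ k(t) · max_{1 ≤ j ≤ m} ‖z_j − z_j′‖ for all t ∈ [t₀, β) and all z, z′ ∈ (ℝⁿ)ᵐ. Let θ : [γ, t₀] → ℝⁿ be a continuous initial function and let β₁ ∈ (t₀, β]. If x, x̃ : [γ, β₁) → ℝⁿ are both continuous, both equal to θ on [γ, t₀], and both differentiable on [t₀, β₁) with x′(t) = f(t, x(g₁(t)), …, x(g_m(t))) and x̃′(t) = f(t, x̃(g₁(t)), …, x̃(g_m(t))) for all t ∈ [t₀, β₁), then x(t) = x̃(t) for all t ∈ [γ, β₁). -/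
/-!
Weighted-norm (Bielecki) argument. On a compact interval `[t₀, T]` let `K ≥ k` be positive, and let
`M` be the maximum of `‖u s‖ * exp (-2 K (s - t₀))` for the difference `u` of the two solutions.
Since `u` vanishes up to `t₀` and the delayed times do not exceed `s`, the Lipschitz condition gives
`‖u' s‖ ≤ K M exp (2 K (s - t₀))`. This is the derivative of `(M / 2) exp (2 K (s - t₀))`, so the
mean value inequality `image_norm_le_of_norm_deriv_right_le_deriv_boundary` bounds `‖u s‖` by that
function. At a maximum point this says `M ≤ M / 2`, hence `M = 0` and `u = 0`.
-/

/-- Uniqueness theorem for the initial value problem for the delay differential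
equation `x' t = f (t, x (g₁ t), …, x (g_m t))`, `x = θ` on `[γ, t₀]`, where `f`
satisfies a Lipschitz condition with continuous time-dependent coefficient `k`:
two solutions on `[γ, β₁)` with the same initial function coincide. -/
theorem delay_ode_uniqueness
    (γ t₀ β β₁ : ℝ) (hγ : γ ≤ t₀) (hβ : t₀ < β)
    (hβ₁ : t₀ < β₁) (hβ₁β : β₁ ≤ β)
    (m n : ℕ) (hm : 1 ≤ m) (hn : 1 ≤ n)
    (f : ℝ → (Fin m → (Fin n → ℝ)) → (Fin n → ℝ))
    (g : Fin m → ℝ → ℝ)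
    (θ x xtil : ℝ → (Fin n → ℝ))
    (k : ℝ → ℝ)
    (hf : Continuous (Function.uncurry f))
    (hg : ∀ j, ContinuousOn (g j) (Set.Ico t₀ β))
    (hgγ : ∀ j, ∀ t ∈ Set.Ico t₀ β, γ ≤ g j t)
    (hgt : ∀ j, ∀ t ∈ Set.Ico t₀ β, g j t ≤ t)
    (hk : ContinuousOn k (Set.Ico t₀ β))
    (hlip : ∀ t ∈ Set.Ico t₀ β, ∀ z z' : Fin m → (Fin n → ℝ),
      ‖f t z - f t z'‖ ≤ k t * ⨆ j, ‖z j - z' j‖)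
    (hθ : ContinuousOn θ (Set.Icc γ t₀))
    (hx : ContinuousOn x (Set.Ico γ β₁))
    (hxtil : ContinuousOn xtil (Set.Ico γ β₁))
    (hxinit : ∀ t ∈ Set.Icc γ t₀, x t = θ t)
    (hxtinit : ∀ t ∈ Set.Icc γ t₀, xtil t = θ t)
    (hxode : ∀ t ∈ Set.Ico t₀ β₁,
      HasDerivWithinAt x (f t (fun j => x (g j t))) (Set.Ici t₀) t)
    (hxtode : ∀ t ∈ Set.Ico t₀ β₁,
      HasDerivWithinAt xtil (f t (fun j => xtil (g j t))) (Set.Ici t₀) t) :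
    ∀ t ∈ Set.Ico γ β₁, x t = xtil t := by
  intro T hT
  rcases le_or_gt T t₀ with h | h
  · rw [hxinit T ⟨hT.1, h⟩, hxtinit T ⟨hT.1, h⟩]
  have hsub : Set.Icc t₀ T ⊆ Set.Ico t₀ β₁ := fun s hs => ⟨hs.1, hs.2.trans_lt hT.2⟩
  have hsubβ : Set.Icc t₀ T ⊆ Set.Ico t₀ β := fun s hs => ⟨hs.1, (hsub hs).2.trans_le hβ₁β⟩
  obtain ⟨K, hK0, hKk⟩ : ∃ K : ℝ, 0 < K ∧ ∀ s ∈ Set.Icc t₀ T, k s ≤ K := by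
    obtain ⟨C, hC⟩ := isCompact_Icc.exists_bound_of_continuousOn (hk.mono hsubβ)
    exact ⟨max C 1, by positivity,
      fun s hs => ((le_abs_self _).trans (hC s hs)).trans (le_max_left _ _)⟩
  set u : ℝ → (Fin n → ℝ) := fun s => x s - xtil s with hu
  have hu0 : ∀ s ∈ Set.Icc γ t₀, u s = 0 := fun s hs => by
    simp [hu, hxinit s hs, hxtinit s hs]
  have hucont : ContinuousOn u (Set.Icc t₀ T) :=
    (hx.sub hxtil).mono fun s hs => ⟨hγ.trans hs.1, (hsub hs).2⟩
  have hwcont : ContinuousOn (fun s => ‖u s‖ * Real.exp (-(2 * K * (s - t₀)))) (Set.Icc t₀ T) :=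
    hucont.norm.mul (by fun_prop)
  obtain ⟨p, hp, hmax⟩ := isCompact_Icc.exists_isMaxOn (Set.nonempty_Icc.2 h.le) hwcont
  set M : ℝ := ‖u p‖ * Real.exp (-(2 * K * (p - t₀))) with hM
  have hM0 : 0 ≤ M := by positivity
  have hbound : ∀ s ∈ Set.Icc t₀ T, ‖u s‖ ≤ M * Real.exp (2 * K * (s - t₀)) := by
    intro s hs
    have h1 : ‖u s‖ * Real.exp (-(2 * K * (s - t₀))) ≤ M := hmax hs
    rwa [Real.exp_neg, ← div_eq_mul_inv, div_le_iff₀ (Real.exp_pos _)] at h1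
  have hder : ∀ s ∈ Set.Ico t₀ T, HasDerivWithinAt u
      (f s (fun j => x (g j s)) - f s (fun j => xtil (g j s))) (Set.Ici s) s := by
    intro s hs
    have hs' := hsub ⟨hs.1, hs.2.le⟩
    exact ((hxode s hs').sub (hxtode s hs')).mono (Set.Ici_subset_Ici.2 hs.1)
  have hB : ∀ s, HasDerivAt (fun s => M / 2 * Real.exp (2 * K * (s - t₀)))
      (K * (M * Real.exp (2 * K * (s - t₀)))) s := by
    intro s
    have h1 : HasDerivAt (fun s : ℝ => 2 * K * (s - t₀)) (2 * K * 1) s :=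
      ((hasDerivAt_id' s).sub_const t₀).const_mul (2 * K)
    exact (h1.exp.const_mul (M / 2)).congr_deriv (by ring)
  have hd : ∀ s ∈ Set.Ico t₀ T, ‖f s (fun j => x (g j s)) - f s (fun j => xtil (g j s))‖
      ≤ K * (M * Real.exp (2 * K * (s - t₀))) := by
    intro s hs
    have hsI : s ∈ Set.Icc t₀ T := ⟨hs.1, hs.2.le⟩
    have hsβ := hsubβ hsI
    refine (hlip s hsβ _ _).trans ?_
    refine mul_le_mul (hKk s hsI) (Real.iSup_le (fun j => ?_) (by positivity))
      (Real.iSup_nonneg fun j => norm_nonneg _) hK0.le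
    change ‖u (g j s)‖ ≤ _
    have hgs := hgt j s hsβ
    rcases le_or_gt (g j s) t₀ with hj | hj
    · rw [hu0 _ ⟨hgγ j s hsβ, hj⟩, norm_zero]
      positivity
    · refine (hbound _ ⟨hj.le, hgs.trans hs.2.le⟩).trans ?_
      gcongr
  have hhalf := image_norm_le_of_norm_deriv_right_le_deriv_boundary hucont hder
    (by rw [hu0 t₀ ⟨hγ, le_rfl⟩, norm_zero]; positivity) hB hd
  have hMM : M ≤ M / 2 := by
    have h1 := hhalf hp
    rw [hM, Real.exp_neg, ← div_eq_mul_inv, div_le_iff₀ (Real.exp_pos _)]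
    rwa [hM, Real.exp_neg, ← div_eq_mul_inv] at h1
  have hMz : M = 0 := by linarith
  have hT0 := hbound T ⟨h.le, le_rfl⟩
  rw [hMz, zero_mul] at hT0
  exact sub_eq_zero.1 (norm_le_zero_iff.1 hT0)
end

section
/- Let γ ≤ t₀ < β be real numbers, m, n ≥ 1, let f : ℝ × (ℝⁿ)ᵐ → ℝⁿ and g₁, …, g_m : [t₀, β) → ℝ be continuous with γ ≤ g_j(t) ≤ t for all t ∈ [t₀, β) and all j, and suppose there is a continuous nonnegative function k : [t₀, β) → ℝ with ‖f(t, z₁, …, z_m) − f(t, z₁′, …, z_m′)‖ ≤ k(t) · max_{1 ≤ j ≤ m} ‖z_j − z_j′‖ for all t ∈ [t₀, β) and all z, z′ ∈ (ℝⁿ)ᵐ. Let θ, θ̃ : [γ, t₀] → ℝⁿ be continuous initial functions, and suppose x, x̃ : [γ, β) → ℝⁿ are continuous, x = θ and x̃ = θ̃ on [γ, t₀], and both are differentiable on [t₀, β) with x′(t) = f(t, x(g₁(t)), …, x(g_m(t))) and x̃′(t) = f(t, x̃(g₁(t)), …, x̃(g_m(t))) for all t ∈ [t₀, β). Then ‖x(t)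 − x̃(t)‖ ≤ (sup_{γ ≤ s ≤ t₀} ‖θ(s) − θ̃(s)‖) · exp( ∫_{t₀}^{t} k(s) ds ) for all t ∈ [t₀, β). -/
/-!
The difference `d = x - x̃` satisfies `‖d' s‖ ≤ k s · sup_{γ ≤ r ≤ s} ‖d r‖`, because every delayed
argument `g_j s` lies in `[γ, s]`. The estimate is therefore a Grönwall inequality with memory,
`norm_le_mul_exp_of_memory`.

That inequality is proved with the barrier `B s = (δ + ε) exp (∫ k)`, where `ε > 0` and `δ` bounds
`‖d‖` on `[γ, t₀]`. Suppose `‖d‖` reaches `B`, for the first time at `t₁`. Since `B` is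
nondecreasing, `‖d r‖ ≤ B s` for all `r ≤ s < t₁`, so `‖d'‖ ≤ k B = B'` on `[t₀, t₁)`. Integrating
from `‖d t₀‖ ≤ δ = B t₀ - ε` gives `‖d t₁‖ ≤ B t₁ - ε`, a contradiction. Finally `ε → 0`.
-/

/-- Grönwall's inequality with memory: the derivative of `d` at `s` is controlled by `k s` times
any bound for `‖d‖` on the whole past `[γ, s]`. -/
theorem norm_le_mul_exp_of_memory {E : Type*} [NormedAddCommGroup E] [NormedSpace ℝ E]
    {γ t₀ T δ : ℝ} (hγ : γ ≤ t₀) (hT : t₀ ≤ T) {d d' : ℝ → E} {k : ℝ → ℝ}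
    (hk : Continuous k) (hk0 : ∀ s, 0 ≤ k s)
    (hd : ContinuousOn d (Set.Icc t₀ T))
    (hd' : ∀ s ∈ Set.Ico t₀ T, HasDerivWithinAt d (d' s) (Set.Ici s) s)
    (hinit : ∀ r ∈ Set.Icc γ t₀, ‖d r‖ ≤ δ)
    (hmem : ∀ s ∈ Set.Ico t₀ T, ∀ M, (∀ r ∈ Set.Icc γ s, ‖d r‖ ≤ M) → ‖d' s‖ ≤ k s * M) :
    ‖d T‖ ≤ δ * Real.exp (∫ s in t₀..T, k s) := by
  have hδ : 0 ≤ δ := (norm_nonneg _).trans (hinit t₀ ⟨hγ, le_rfl⟩)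
  set K : ℝ → ℝ := fun s => Real.exp (∫ u in t₀..s, k u) with hK
  have hKt₀ : K t₀ = 1 := by simp [hK]
  have hKd : ∀ s, HasDerivAt K (K s * k s) s := fun s =>
    (intervalIntegral.integral_hasDerivAt_right (hk.intervalIntegrable _ _)
      hk.aestronglyMeasurable.stronglyMeasurableAtFilter hk.continuousAt).exp
  have hKpos : ∀ s, 0 < K s := fun s => Real.exp_pos _
  have hKc : Continuous K := continuous_iff_continuousAt.2 fun s => (hKd s).continuousAt
  have hKmono : Monotone K :=
    monotone_of_hasDerivAt_nonneg hKd fun s => mul_nonneg (hKpos s).le (hk0 s)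
  have key : ∀ ε > 0, ‖d T‖ < (δ + ε) * K T := by
    intro ε hε
    by_contra! hcon
    have hcpt : IsCompact {s ∈ Set.Icc t₀ T | (δ + ε) * K s ≤ ‖d s‖} := by
      refine isCompact_Icc.of_isClosed_subset ?_ (Set.sep_subset _ _)
      exact isClosed_Icc.isClosed_le (by fun_prop) hd.norm
    -- `t₁` is the first time at which `‖d‖` reaches the barrier.
    obtain ⟨t₁, ⟨ht₁, hle⟩, hmin⟩ := hcpt.exists_isLeast ⟨T, ⟨hT, le_rfl⟩, hcon⟩
    have hbelow : ∀ s, t₀ ≤ s → s < t₁ → ‖d s‖ < (δ + ε) * K s := by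
      intro s hs hst
      by_contra! h
      exact absurd (hmin ⟨⟨hs, hst.le.trans ht₁.2⟩, h⟩) (not_le.2 hst)
    have hfence := image_norm_le_of_norm_deriv_right_le_deriv_boundary'
      (f := d) (f' := d') (a := t₀) (b := t₁)
      (B := fun s => (δ + ε) * K s - ε) (B' := fun s => (δ + ε) * (K s * k s))
      (hd.mono (Set.Icc_subset_Icc_right ht₁.2))
      (fun s hs => hd' s ⟨hs.1, hs.2.trans_le ht₁.2⟩)
      (by simpa [hKt₀] using hinit t₀ ⟨hγ, le_rfl⟩)
      (by fun_prop)
      (fun s _ => (((hKd s).const_mul (δ + ε)).sub_const ε).hasDerivWithinAt)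
      (by
        intro s hs
        have := hmem s ⟨hs.1, hs.2.trans_le ht₁.2⟩ ((δ + ε) * K s) (by
          intro r hr
          rcases le_total r t₀ with h | h
          · have h1 : 1 ≤ K s := hKt₀ ▸ hKmono hs.1
            nlinarith [hinit r ⟨hr.1, h⟩]
          · refine (hbelow r h (hr.2.trans_lt hs.2)).le.trans ?_
            exact mul_le_mul_of_nonneg_left (hKmono hr.2) (by positivity))
        linarith)
    have := hfence ⟨ht₁.1, le_rfl⟩
    linarith
  refine le_of_forall_pos_le_add fun η hη => ?_
  -- This choice of `ε` makes the excess `ε * K T` equal to `η`.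
  have h := key (η / K T) (div_pos hη (hKpos T))
  rw [add_mul, div_mul_cancel₀ _ (hKpos T).ne'] at h
  exact h.le

/-- Continuous dependence on the initial function: if `x` and `x̃` solve the delay
differential equation `x' t = f (t, x (g₁ t), …, x (g_m t))` with initial functions
`θ`, `θ̃` respectively, and `f` is Lipschitz in the delayed arguments with continuous
nonnegative time-dependent coefficient `k`, then
`‖x t - x̃ t‖ ≤ (sup_{γ ≤ s ≤ t₀} ‖θ s - θ̃ s‖) · exp (∫_{t₀}^t k)`. -/
theorem delay_ode_continuous_dependence
    (γ t₀ β : ℝ) (hγ : γ ≤ t₀) (hβ : t₀ < β)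
    (m n : ℕ) (hm : 1 ≤ m) (hn : 1 ≤ n)
    (f : ℝ → (Fin m → (Fin n → ℝ)) → (Fin n → ℝ))
    (g : Fin m → ℝ → ℝ)
    (θ θtil x xtil : ℝ → (Fin n → ℝ))
    (k : ℝ → ℝ)
    (hf : Continuous (Function.uncurry f))
    (hg : ∀ j, ContinuousOn (g j) (Set.Ico t₀ β))
    (hgγ : ∀ j, ∀ t ∈ Set.Ico t₀ β, γ ≤ g j t)
    (hgt : ∀ j, ∀ t ∈ Set.Ico t₀ β, g j t ≤ t)
    (hk : ContinuousOn k (Set.Ico t₀ β))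
    (hk0 : ∀ t ∈ Set.Ico t₀ β, 0 ≤ k t)
    (hlip : ∀ t ∈ Set.Ico t₀ β, ∀ z z' : Fin m → (Fin n → ℝ),
      ‖f t z - f t z'‖ ≤ k t * ⨆ j, ‖z j - z' j‖)
    (hθ : ContinuousOn θ (Set.Icc γ t₀))
    (hθtil : ContinuousOn θtil (Set.Icc γ t₀))
    (hx : ContinuousOn x (Set.Ico γ β))
    (hxtil : ContinuousOn xtil (Set.Ico γ β))
    (hxinit : ∀ t ∈ Set.Icc γ t₀, x t = θ t)
    (hxtinit : ∀ t ∈ Set.Icc γ t₀, xtil t = θtil t)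
    (hxode : ∀ t ∈ Set.Ico t₀ β,
      HasDerivWithinAt x (f t (fun j => x (g j t))) (Set.Ici t₀) t)
    (hxtode : ∀ t ∈ Set.Ico t₀ β,
      HasDerivWithinAt xtil (f t (fun j => xtil (g j t))) (Set.Ici t₀) t) :
    ∀ t ∈ Set.Ico t₀ β,
      ‖x t - xtil t‖ ≤
        (⨆ s : Set.Icc γ t₀, ‖θ s.1 - θtil s.1‖) *
          Real.exp (∫ s in t₀..t, k s) := by
  intro t ht
  have hne : Nonempty (Fin m) := ⟨⟨0, hm⟩⟩
  have hsub : Set.Icc t₀ t ⊆ Set.Ico t₀ β := fun s hs => ⟨hs.1, hs.2.trans_lt ht.2⟩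
  -- `k` is extended from `[t₀, t]` to a continuous nonnegative function on the whole line.
  set κ : ℝ → ℝ := Set.IccExtend ht.1 ((Set.Icc t₀ t).domRestrict k) with hκ
  have hκk : ∀ s ∈ Set.Icc t₀ t, κ s = k s := fun s hs => by
    rw [hκ, Set.IccExtend_of_mem _ _ hs, Set.domRestrict_apply]
  have hint : ∫ s in t₀..t, k s = ∫ s in t₀..t, κ s := by
    refine intervalIntegral.integral_congr fun s hs => ?_
    rw [Set.uIcc_of_le ht.1] at hs
    exact (hκk s hs).symm
  -- The supremum over `[γ, t₀]` is attained on a compact set, so it is a genuine upper bound.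
  have hbdd : BddAbove (Set.range fun s : Set.Icc γ t₀ => ‖θ s.1 - θtil s.1‖) := by
    have := (isCompact_Icc.image_of_continuousOn (hθ.sub hθtil).norm).bddAbove
    rwa [Set.image_eq_range] at this
  rw [hint]
  refine norm_le_mul_exp_of_memory (d := fun s => x s - xtil s)
    (d' := fun s => f s (fun j => x (g j s)) - f s (fun j => xtil (g j s))) hγ ht.1
    (hk.mono hsub).domRestrict.Icc_extend' (fun s => hk0 _ (hsub (Set.projIcc t₀ t ht.1 s).2))
    ?_ ?_ ?_ ?_
  · have h : Set.Icc t₀ t ⊆ Set.Ico γ β := fun s hs => ⟨hγ.trans hs.1, hs.2.trans_lt ht.2⟩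
    exact (hx.mono h).sub (hxtil.mono h)
  · intro s hs
    have hs' := hsub ⟨hs.1, hs.2.le⟩
    exact ((hxode s hs').sub (hxtode s hs')).mono (Set.Ici_subset_Ici.2 hs.1)
  · intro r hr
    simp only [hxinit r hr, hxtinit r hr]
    exact le_ciSup hbdd ⟨r, hr⟩
  · intro s hs M hM
    have hs' := hsub ⟨hs.1, hs.2.le⟩
    rw [hκk s ⟨hs.1, hs.2.le⟩]
    refine (hlip s hs' _ _).trans (mul_le_mul_of_nonneg_left ?_ (hk0 s hs'))
    exact ciSup_le fun j => hM _ ⟨hgγ j s hs', hgt j s hs'⟩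
end

section
/- Let ε > 0, let γ ≤ t₀ < β be real numbers, m, n ≥ 1, let f : ℝ × (ℝⁿ)ᵐ → ℝⁿ and g₁, …, g_m : [t₀, β) → ℝ be continuous with γ ≤ g_j(t) ≤ t for all t ∈ [t₀, β) and all j, and suppose there is a continuous nonnegative function k : [t₀, β) → ℝ with ‖f(t, z₁, …, z_m) − f(t, z₁′, …, z_m′)‖ ≤ k(t) · max_{1 ≤ j ≤ m} ‖z_j − z_j′‖ for all t ∈ [t₀, β) and all z, z′ ∈ (ℝⁿ)ᵐ. Let θ : [γ, t₀] → ℝⁿ be a continuous initial function. Suppose x : [γ, β) → ℝⁿ is continuous, x = θ on [γ, t₀], x is differentiable on [t₀, β), and ‖x′(t) − f(t, x(g₁(t)), …, x(g_m(t)))‖ ≤ ε for all t ∈ [t₀, β). Suppose further x̃ : [γ, β) → ℝⁿ is continuous, x̃ = θ on [γ, t₀], and x̃ is differentiable on [t₀, β) with x̃′(t) = f(t, x̃(g₁(t)), …, x̃(g_m(t))) for all t ∈ [t₀, β). Then ‖x(t) − x̃(t)‖ ≤ ε·(t − t₀)·exp( ∫_{t₀}^{t} k(s) ds ) for all t ∈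 [t₀, β); moreover, such a solution x̃ is unique. -/
/-!
Let `D = x - x̃`, which vanishes on `[γ, t₀]`, and let `K t = ∫_{t₀}^t k`. The Lipschitz condition
gives `‖D' t‖ ≤ ε + k t * C` as soon as `C` bounds `‖D‖` on `[γ, t]`. For `η > 0` the increasing
function `B t = (ε (t - t₀) + η) exp (K t)` satisfies `B' ≥ ε + k B` and `B t₀ = η`. At a first time
`t₁` with `‖D t₁‖ ≥ B t₁`, the bound `‖D‖ ≤ B` on the whole past of each `t < t₁` yields
`‖D'‖ ≤ B'` on `[t₀, t₁)`, whence `‖D t₁‖ ≤ B t₁ - η`, which is absurd. So `‖D‖ ≤ B`, and `η → 0`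
gives the estimate. This works for every `ε ≥ 0`, and `ε = 0` gives uniqueness.
-/

open Set in
/-- Delay Grönwall inequality with slack `η > 0` and a coefficient `k` that is continuous and
nonnegative on all of `ℝ`. -/
theorem delay_gronwall_slack {E : Type*} [NormedAddCommGroup E] [NormedSpace ℝ E]
    {γ t₀ T ε η : ℝ} {D D' : ℝ → E} {k : ℝ → ℝ} (hε : 0 ≤ ε) (hη : 0 < η)
    (hk : Continuous k) (hk0 : ∀ t, 0 ≤ k t)
    (hD : ContinuousOn D (Icc t₀ T)) (hD0 : ∀ t ∈ Icc γ t₀, D t = 0) (hγ : γ ≤ t₀)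
    (hder : ∀ t ∈ Ico t₀ T, HasDerivWithinAt D (D' t) (Ici t) t)
    (hbound : ∀ t ∈ Ico t₀ T, ∀ C, (∀ s ∈ Icc γ t, ‖D s‖ ≤ C) → ‖D' t‖ ≤ ε + k t * C) :
    ∀ t ∈ Icc t₀ T, ‖D t‖ ≤ (ε * (t - t₀) + η) * Real.exp (∫ s in t₀..t, k s) := by
  set B : ℝ → ℝ := fun t => (ε * (t - t₀) + η) * Real.exp (∫ s in t₀..t, k s) with hBdef
  have hBder : ∀ t, HasDerivAt B (ε * Real.exp (∫ s in t₀..t, k s) + k t * B t) t := by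
    intro t
    have h1 : HasDerivAt (fun u => ∫ s in t₀..u, k s) (k t) t :=
      intervalIntegral.integral_hasDerivAt_right (hk.intervalIntegrable _ _)
        hk.stronglyMeasurable.stronglyMeasurableAtFilter hk.continuousAt
    have h2 : HasDerivAt (fun u => ε * (u - t₀) + η) ε t := by
      simpa using (((hasDerivAt_id t).sub_const t₀).const_mul ε).add_const η
    refine (h2.mul h1.exp).congr_deriv ?_
    simp only [hBdef]
    ring
  have hBc : Continuous B := continuous_iff_continuousAt.2 fun t => (hBder t).continuousAt
  have hexp : ∀ t, t₀ ≤ t → 1 ≤ Real.exp (∫ s in t₀..t, k s) := fun t ht =>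
    Real.one_le_exp (intervalIntegral.integral_nonneg ht fun s _ => hk0 s)
  have hBpos : ∀ t, t₀ ≤ t → 0 < B t := fun t ht => by
    have : 0 ≤ ε * (t - t₀) := mul_nonneg hε (sub_nonneg.2 ht)
    positivity
  have hBmono : MonotoneOn B (Ici t₀) := by
    refine monotoneOn_of_hasDerivWithinAt_nonneg (convex_Ici t₀) hBc.continuousOn
      (fun t _ => (hBder t).hasDerivWithinAt) fun t ht => ?_
    have ht' : t₀ ≤ t := interior_subset ht
    have := mul_nonneg (hk0 t) (hBpos t ht').le
    positivity
  have hBt₀ : B t₀ = η := by simp [hBdef]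
  by_contra! hcon
  obtain ⟨u, hu, hDu⟩ := hcon
  -- `t₁` is the first time at which `‖D‖` reaches `B`.
  obtain ⟨t₁, ⟨ht₁, hDt₁⟩, hmin⟩ : ∃ t₁, IsLeast {t ∈ Icc t₀ T | B t ≤ ‖D t‖} t₁ := by
    refine IsCompact.exists_isLeast ?_ ⟨u, hu, hDu.le⟩
    exact isCompact_Icc.of_isClosed_subset
      (isClosed_Icc.isClosed_le hBc.continuousOn hD.norm) (sep_subset _ _)
  have hlt : ∀ t ∈ Ico t₀ t₁, ‖D t‖ < B t := by
    intro t ht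
    by_contra! h
    exact absurd (hmin ⟨⟨ht.1, ht.2.le.trans ht₁.2⟩, h⟩) (not_le.2 ht.2)
  have hDt₀ : D t₀ = 0 := hD0 t₀ ⟨hγ, le_rfl⟩
  -- `B - η` has the same derivative as `B` and vanishes at `t₀`, as `D` does.
  have key := image_norm_le_of_norm_deriv_right_le_deriv_boundary' (f := D) (f' := D')
    (a := t₀) (b := t₁) (B := fun t => B t - η)
    (B' := fun t => ε * Real.exp (∫ s in t₀..t, k s) + k t * B t)
    (hD.mono (Icc_subset_Icc_right ht₁.2))
    (fun t ht => hder t ⟨ht.1, ht.2.trans_le ht₁.2⟩)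
    (by simp [hDt₀, hBt₀]) (hBc.sub continuous_const).continuousOn
    (fun t _ => ((hBder t).sub_const η).hasDerivWithinAt)
    (fun t ht => by
      have h := hbound t ⟨ht.1, ht.2.trans_le ht₁.2⟩ (B t) fun s hs => by
        rcases le_total s t₀ with h | h
        · simpa [hD0 s ⟨hs.1, h⟩] using (hBpos t ht.1).le
        · exact (hlt s ⟨h, hs.2.trans_lt ht.2⟩).le.trans (hBmono h ht.1 hs.2)
      have h1 := le_mul_of_one_le_right hε (hexp t ht.1)
      linarith)
    ⟨ht₁.1, le_rfl⟩
  linarith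

open Set in
/-- Delay Grönwall inequality: if `D` vanishes on `[γ, t₀]` and `‖D' t‖ ≤ ε + k t * C` whenever `C`
bounds `‖D‖` on the past `[γ, t]`, then `‖D t‖ ≤ ε (t - t₀) exp (∫_{t₀}^t k)`. -/
theorem delay_gronwall {E : Type*} [NormedAddCommGroup E] [NormedSpace ℝ E]
    {γ t₀ β ε : ℝ} {D D' : ℝ → E} {k : ℝ → ℝ} (hε : 0 ≤ ε)
    (hk : ContinuousOn k (Ico t₀ β)) (hk0 : ∀ t ∈ Ico t₀ β, 0 ≤ k t)
    (hD0 : ∀ t ∈ Icc γ t₀, D t = 0) (hγ : γ ≤ t₀)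
    (hder : ∀ t ∈ Ico t₀ β, HasDerivWithinAt D (D' t) (Ici t₀) t)
    (hbound : ∀ t ∈ Ico t₀ β, ∀ C, (∀ s ∈ Icc γ t, ‖D s‖ ≤ C) → ‖D' t‖ ≤ ε + k t * C) :
    ∀ t ∈ Ico t₀ β, ‖D t‖ ≤ ε * (t - t₀) * Real.exp (∫ s in t₀..t, k s) := by
  intro T hT
  -- Extend `k` from `[t₀, T]` to `ℝ` by constants.
  have hproj : ∀ t, max t₀ (min t T) ∈ Ico t₀ β := fun t =>
    ⟨le_max_left _ _, max_lt (hT.1.trans_lt hT.2) ((min_le_right _ _).trans_lt hT.2)⟩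
  have heq : ∀ t ∈ Icc t₀ T, max t₀ (min t T) = t := fun t ht => by
    rw [min_eq_left ht.2, max_eq_right ht.1]
  have hint : ∫ s in t₀..T, k (max t₀ (min s T)) = ∫ s in t₀..T, k s :=
    intervalIntegral.integral_congr fun s hs => by
      rw [uIcc_of_le hT.1] at hs
      simp only [heq s hs]
  have hsub : ∀ t ∈ Ico t₀ T, t ∈ Ico t₀ β := fun t ht => ⟨ht.1, ht.2.trans hT.2⟩
  have hslack : ∀ η > 0, ‖D T‖ ≤ (ε * (T - t₀) + η) * Real.exp (∫ s in t₀..T, k s) := by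
    intro η hη
    rw [← hint]
    refine delay_gronwall_slack (D := D) (D' := D') (k := fun s => k (max t₀ (min s T))) hε hη
      (hk.comp_continuous (by fun_prop) hproj) (fun t => hk0 _ (hproj t)) ?_ hD0 hγ ?_ ?_ T
      ⟨hT.1, le_rfl⟩
    · exact fun t ht => ((hder t ⟨ht.1, ht.2.trans_lt hT.2⟩).continuousWithinAt).mono
        Icc_subset_Ici_self
    · exact fun t ht => (hder t (hsub t ht)).mono (Ici_subset_Ici.2 ht.1)
    · intro t ht C hC
      simp only [heq t (Ico_subset_Icc_self ht)]
      exact hbound t (hsub t ht) C hC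
  refine le_of_forall_pos_le_add fun δ hδ => ?_
  have hpos := Real.exp_pos (∫ s in t₀..T, k s)
  have h := hslack (δ / Real.exp (∫ s in t₀..T, k s)) (by positivity)
  rwa [add_mul, div_mul_cancel₀ _ hpos.ne'] at h

open Set in
/-- The Lipschitz condition turns a bound for `y - z` on the past `[γ, t]` into a bound for the
difference between the derivative `y'` at `t` and the right-hand side `F` evaluated along `z`. -/
theorem norm_deriv_sub_le_of_past_bound {E : Type*} [NormedAddCommGroup E] {m : ℕ} (hm : 1 ≤ m)
    {γ t ε k C : ℝ} {F : (Fin m → E) → E} {g : Fin m → ℝ} {y z : ℝ → E} {y' : E}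
    (hg : ∀ j, g j ∈ Icc γ t) (hk : 0 ≤ k)
    (hlip : ∀ u v : Fin m → E, ‖F u - F v‖ ≤ k * ⨆ j, ‖u j - v j‖)
    (hy : ‖y' - F (fun j => y (g j))‖ ≤ ε) (hC : ∀ s ∈ Icc γ t, ‖y s - z s‖ ≤ C) :
    ‖y' - F (fun j => z (g j))‖ ≤ ε + k * C := by
  have : Nonempty (Fin m) := ⟨⟨0, hm⟩⟩
  refine (norm_sub_le_norm_sub_add_norm_sub _ (F fun j => y (g j)) _).trans (add_le_add hy ?_)
  exact (hlip _ _).trans (mul_le_mul_of_nonneg_left (ciSup_le fun j => hC _ (hg j)) hk)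


/-- Hyers–Ulam-type stability for the delay differential equation
`x' t = f (t, x (g₁ t), …, x (g_m t))` with initial function `θ`, where `f` is
Lipschitz in the delayed arguments with continuous nonnegative time-dependent
coefficient `k`. If `x` satisfies the initial condition exactly and the equation
up to error `ε` (here `x'` denotes the derivative of `x` on `[t₀, β)`), and `x̃`
is an exact solution with the same initial function, then
`‖x t - x̃ t‖ ≤ ε (t - t₀) exp (∫_{t₀}^t k)`; moreover such a solution `x̃` is
unique. -/
theorem delay_ode_hyers_ulam_stability
    (ε : ℝ) (hε : 0 < ε)
    (γ t₀ β : ℝ) (hγ : γ ≤ t₀) (hβ : t₀ < β)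
    (m n : ℕ) (hm : 1 ≤ m) (hn : 1 ≤ n)
    (f : ℝ → (Fin m → (Fin n → ℝ)) → (Fin n → ℝ))
    (g : Fin m → ℝ → ℝ)
    (θ x x' xtil : ℝ → (Fin n → ℝ))
    (k : ℝ → ℝ)
    (hf : Continuous (Function.uncurry f))
    (hg : ∀ j, ContinuousOn (g j) (Set.Ico t₀ β))
    (hgγ : ∀ j, ∀ t ∈ Set.Ico t₀ β, γ ≤ g j t)
    (hgt : ∀ j, ∀ t ∈ Set.Ico t₀ β, g j t ≤ t)
    (hk : ContinuousOn k (Set.Ico t₀ β))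
    (hk0 : ∀ t ∈ Set.Ico t₀ β, 0 ≤ k t)
    (hlip : ∀ t ∈ Set.Ico t₀ β, ∀ z z' : Fin m → (Fin n → ℝ),
      ‖f t z - f t z'‖ ≤ k t * ⨆ j, ‖z j - z' j‖)
    (hθ : ContinuousOn θ (Set.Icc γ t₀))
    -- `x` is an `ε`-approximate solution with initial function `θ`:
    (hx : ContinuousOn x (Set.Ico γ β))
    (hxinit : ∀ t ∈ Set.Icc γ t₀, x t = θ t)
    (hxder : ∀ t ∈ Set.Ico t₀ β, HasDerivWithinAt x (x' t) (Set.Ici t₀) t)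
    (hxapprox : ∀ t ∈ Set.Ico t₀ β,
      ‖x' t - f t (fun j => x (g j t))‖ ≤ ε)
    -- `x̃` is an exact solution with the same initial function `θ`:
    (hxtil : ContinuousOn xtil (Set.Ico γ β))
    (hxtinit : ∀ t ∈ Set.Icc γ t₀, xtil t = θ t)
    (hxtode : ∀ t ∈ Set.Ico t₀ β,
      HasDerivWithinAt xtil (f t (fun j => xtil (g j t))) (Set.Ici t₀) t) :
    (∀ t ∈ Set.Ico t₀ β,
      ‖x t - xtil t‖ ≤ ε * (t - t₀) * Real.exp (∫ s in t₀..t, k s)) ∧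
    (∀ z : ℝ → (Fin n → ℝ),
      ContinuousOn z (Set.Ico γ β) →
      (∀ t ∈ Set.Icc γ t₀, z t = θ t) →
      (∀ t ∈ Set.Ico t₀ β,
        HasDerivWithinAt z (f t (fun j => z (g j t))) (Set.Ici t₀) t) →
      ∀ t ∈ Set.Ico γ β, z t = xtil t) := by
  refine ⟨?_, ?_⟩
  · refine delay_gronwall (D := fun t => x t - xtil t)
      (D' := fun t => x' t - f t (fun j => xtil (g j t))) hε.le hk hk0
      (fun t ht => by simp [hxinit t ht, hxtinit t ht]) hγ
      (fun t ht => (hxder t ht).sub (hxtode t ht)) fun t ht C hC => ?_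
    exact norm_deriv_sub_le_of_past_bound hm (fun j => ⟨hgγ j t ht, hgt j t ht⟩) (hk0 t ht)
      (hlip t ht) (hxapprox t ht) hC
  · intro z _ hzinit hzode t ht
    rcases le_total t t₀ with h | h
    · rw [hzinit t ⟨ht.1, h⟩, hxtinit t ⟨ht.1, h⟩]
    -- An exact solution is an approximate solution with error `0`.
    have key := delay_gronwall (ε := 0) (D := fun t => z t - xtil t)
      (D' := fun t => f t (fun j => z (g j t)) - f t (fun j => xtil (g j t))) le_rfl hk hk0
      (fun t ht => by simp [hzinit t ht, hxtinit t ht]) hγ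
      (fun t ht => (hzode t ht).sub (hxtode t ht))
      (fun t ht C hC => norm_deriv_sub_le_of_past_bound hm
        (fun j => ⟨hgγ j t ht, hgt j t ht⟩) (hk0 t ht) (hlip t ht) (by simp) hC)
      t ⟨h, ht.2⟩
    rw [zero_mul, zero_mul] at key
    exact sub_eq_zero.1 (norm_le_zero_iff.1 key)
end
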